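/- Let q be a prime power with q > 2 and let S be an algebraic hypersurface of PG(6,q^2) of degree q+1 defined over GF(q^2), not containing any solid, with exactly q^11 + q^9 + q^7 + q^4 + q^2 + 1 rational points. If Sigma_3 is a solid of PG(6,q^2) meeting S in exactly q^4 + q^2 + 1 rational points, then the intersection S ∩ Sigma_3 is a plane (a 2-dimensional projective subspace) of PG(6,q^2). -/

import Mathlib

open MvPolynomial Module

/-- The set of points of the projective subspace of `PG(n-1, F)` determined by
the linear subspace `W` of `F^n`. -/
def projPts {F : Type} [Field F] {n : ℕ} (W : Submodule F (Fin n → F)) :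
    Set (Projectivization F (Fin n → F)) :=
  {P | P.submodule ≤ W}

/-- The set of `F`-rational points of the hypersurface of `PG(n-1, F)` defined by the
homogeneous polynomial `f`. -/
def hypersurfacePts {F : Type} [Field F] {n : ℕ} (f : MvPolynomial (Fin n) F) :
    Set (Projectivization F (Fin n → F)) :=
  {P | MvPolynomial.eval P.rep f = 0}


lemma aux_coeff_prod {ι : Type*} {F : Type*} [Field F] (s : Finset ι) (l : ι → Polynomial F) (n : ι → ℕ)
    (h : ∀ i ∈ s, (l i).natDegree ≤ n i) :
    (∏ i ∈ s, l i).natDegree ≤ ∑ i ∈ s, n i ∧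
    (∏ i ∈ s, l i).coeff (∑ i ∈ s, n i) = ∏ i ∈ s, (l i).coeff (n i) := by
  classical
  induction s using Finset.induction_on with
  | empty => simp
  | insert a s ha ih =>
    obtain ⟨h1, h2⟩ := ih (fun i hi => h i (Finset.mem_insert_of_mem hi))
    have h3 := h a (Finset.mem_insert_self a s)
    rw [Finset.prod_insert ha, Finset.sum_insert ha, Finset.prod_insert ha]
    refine ⟨Polynomial.natDegree_mul_le_of_le h3 h1, ?_⟩
    rw [Polynomial.coeff_mul_add_eq_of_natDegree_le h3 h1, h2]

/-- restriction to a line -/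
noncomputable def lineR {σ : Type} {F : Type} [Field F] (c v : σ → F) :
    MvPolynomial σ F →ₐ[F] Polynomial F :=
  aeval (fun i => Polynomial.C (c i) + Polynomial.C (v i) * Polynomial.X)

lemma lineR_natDegree {σ : Type} {F : Type} [Field F] (c v : σ → F) (p : MvPolynomial σ F) (d : ℕ)
    (hp : p.totalDegree ≤ d) : (lineR c v p).natDegree ≤ d := by
  have := MvPolynomial.aeval_natDegree_le (n := 1) p hp
    (fun i => Polynomial.C (c i) + Polynomial.C (v i) * Polynomial.X) (fun i => by compute_degree)
  simpa [lineR] using this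

lemma lineR_eval {σ : Type} {F : Type} [Field F] (c v : σ → F) (p : MvPolynomial σ F) (s : F) :
    (lineR c v p).eval s = eval (c + s • v) p := by
  have : ((Polynomial.aeval s).comp (lineR c v)) = aeval (c + s • v) := by
    ext i
    simp [lineR]
    ring
  have := DFunLike.congr_fun this p
  simpa [Polynomial.aeval_def, MvPolynomial.aeval_eq_eval, Polynomial.eval₂_eq_eval_map] using this

lemma lineR_coeff {σ : Type} {F : Type} [Field F] (c v : σ → F) (p : MvPolynomial σ F) (d : ℕ)
    (hp : p.totalDegree ≤ d) :
    (lineR c v p).coeff d = eval v (homogeneousComponent d p) := by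
  classical
  have hlin : ∀ i : σ, (Polynomial.C (c i) + Polynomial.C (v i) * Polynomial.X).natDegree ≤ 1 :=
    fun i => by compute_degree
  have hmon : ∀ (m : σ →₀ ℕ) (a : F), m.degree ≤ d →
      (lineR c v (monomial m a)).coeff d = eval v (homogeneousComponent d (monomial m a)) := by
    intro m a hm
    rcases hm.lt_or_eq with h | h
    · rw [homogeneousComponent_eq_zero, map_zero]
      · apply Polynomial.coeff_eq_zero_of_natDegree_lt
        refine lt_of_le_of_lt (lineR_natDegree c v _ m.degree ?_) h
        exact totalDegree_monomial_le _ _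
      · exact lt_of_le_of_lt (totalDegree_monomial_le _ _) h
    · rw [homogeneousComponent_eq_self (isHomogeneous_monomial a h)]
      have := (aux_coeff_prod m.support
        (fun i => (Polynomial.C (c i) + Polynomial.C (v i) * Polynomial.X) ^ (m i)) m
        (fun i _ => by simpa using Polynomial.natDegree_pow_le_of_le (m i) (hlin i))).2
      have e : ∑ i ∈ m.support, m i = d := by rw [← h]; rfl
      rw [e] at this
      rw [lineR, aeval_monomial, Finsupp.prod, eval_monomial, Finsupp.prod,
        ← Polynomial.C_eq_algebraMap, Polynomial.coeff_C_mul, this]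
      congr 1
      refine Finset.prod_congr rfl fun i _ => ?_
      have := Polynomial.coeff_pow_of_natDegree_le (hlin i) (m := m i)
      simpa using this
  conv_lhs => rw [p.as_sum]
  conv_rhs => rw [p.as_sum]
  rw [map_sum, map_sum, map_sum, Polynomial.finsetSum_coeff]
  refine Finset.sum_congr rfl fun m hm => hmon m _ ?_
  exact (le_totalDegree hm).trans hp

lemma hc_mul {σ : Type} {F : Type} [Field F] (a b : MvPolynomial σ F) (m n : ℕ)
    (ha : a.totalDegree ≤ m) (hb : b.totalDegree ≤ n) :
    homogeneousComponent (m + n) (a * b) = homogeneousComponent m a * homogeneousComponent n b := by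
  classical
  ext k
  rw [coeff_homogeneousComponent]
  split_ifs with hk
  · rw [coeff_mul, coeff_mul]
    refine Finset.sum_congr rfl fun x hx => ?_
    rw [coeff_homogeneousComponent, coeff_homogeneousComponent]
    have hx := Finset.HasAntidiagonal.mem_antidiagonal.mp hx
    have hd : x.1.degree + x.2.degree = m + n := by rw [← hk, ← hx, map_add]
    have h1 : ∀ (c : MvPolynomial σ F) (y : σ →₀ ℕ) (l : ℕ), c.totalDegree ≤ l → l < y.degree →
        coeff y c = 0 := by
      intro c y l hc hy
      by_contra h
      have := le_totalDegree (mem_support_iff.mpr h)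
      have h' : y.degree = y.sum fun _ e => e := rfl
      omega
    by_cases e1 : x.1.degree = m
    · have e2 : x.2.degree = n := by omega
      rw [if_pos e1, if_pos e2]
    · rw [if_neg e1, zero_mul]
      rcases lt_or_gt_of_ne e1 with h | h
      · rw [h1 b x.2 n hb (by omega), mul_zero]
      · rw [h1 a x.1 m ha h, zero_mul]
  · symm
    exact ((homogeneousComponent_isHomogeneous m a).mul
      (homogeneousComponent_isHomogeneous n b)).coeff_eq_zero hk

lemma hc_pderiv {σ : Type} {F : Type} [Field F] (a : MvPolynomial σ F) (m : ℕ) (i : σ) :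
    homogeneousComponent m (pderiv i a) = pderiv i (homogeneousComponent (m + 1) a) := by
  classical
  ext k
  rw [coeff_homogeneousComponent, coeff_pderiv, coeff_pderiv, coeff_homogeneousComponent]
  simp only [map_add, Finsupp.degree_single, add_left_inj]
  split_ifs <;> simp

lemma totalDegree_pderiv_le {σ : Type} {F : Type} [Field F] (a : MvPolynomial σ F) (m : ℕ) (i : σ)
    (h : a.totalDegree ≤ m + 1) : (pderiv i a).totalDegree ≤ m := by
  classical
  refine Finset.sup_le fun k hk => ?_
  rw [MvPolynomial.mem_support_iff, coeff_pderiv] at hk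
  have := le_totalDegree (MvPolynomial.mem_support_iff.mpr (left_ne_zero_of_mul hk))
  have h2 : (k + Finsupp.single i 1).degree = (k + Finsupp.single i 1).sum fun _ e => e := rfl
  have h3 : k.degree = k.sum fun _ e => e := rfl
  rw [map_add, Finsupp.degree_single] at h2
  omega

/-- the Stöhr-Voloch polynomial -/
noncomputable def svPoly {F : Type} [Field F] (Q : ℕ) (f : MvPolynomial (Fin 2) F) :
    MvPolynomial (Fin 2) F :=
  ∑ i, (X i ^ Q - X i) * pderiv i f

lemma deriv_chain {F : Type} [Field F] (p : MvPolynomial (Fin 2) F) :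
    Polynomial.derivative (lineR ![0, 1] ![1, 0] p) = lineR ![0, 1] ![1, 0] (pderiv 0 p) := by
  induction p using MvPolynomial.induction_on with
  | C a => simp [lineR]
  | add p q hp hq => simp [hp, hq]
  | mul_X p i hp =>
    rw [map_mul, Polynomial.derivative_mul, hp, pderiv_mul, map_add, map_mul, map_mul]
    congr 2
    fin_cases i <;> simp [lineR, pderiv_X]

lemma svPoly_totalDegree {F : Type} [Field F] (Q d : ℕ) (hQ : 1 ≤ Q) (f : MvPolynomial (Fin 2) F)
    (h : f.totalDegree ≤ d + 1) : (svPoly Q f).totalDegree ≤ Q + d := by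
  refine totalDegree_finsetSum_le fun i _ => (totalDegree_mul _ _).trans ?_
  refine add_le_add ((totalDegree_sub _ _).trans ?_) (totalDegree_pderiv_le f d i h)
  rw [totalDegree_X_pow, totalDegree_X]
  simpa using hQ

lemma aux_prod_X_sub {F : Type} [Field F] [Fintype F] :
    ∏ a : F, (Polynomial.X - Polynomial.C a) =
      (Polynomial.X ^ Fintype.card F - Polynomial.X : Polynomial F) := by
  have hr := FiniteField.roots_X_pow_card_sub_X F
  have hd := FiniteField.X_pow_card_sub_X_natDegree_eq F (Fintype.one_lt_card (α := F))
  have hm : (Polynomial.X ^ Fintype.card F - Polynomial.X : Polynomial F).Monic :=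
    Polynomial.monic_X_pow_sub (by simpa using Fintype.one_lt_card (α := F))
  have := Polynomial.prod_multiset_X_sub_C_of_monic_of_roots_card_eq hm (by rw [hr, hd]; rfl)
  rw [hr] at this
  exact this

lemma not_dvd_sv {F : Type} [Field F] [Fintype F] (Q d : ℕ) (hQ : Fintype.card F = Q)
    (hd : (d : F) = 1) (f : MvPolynomial (Fin 2) F) (hf : f.totalDegree ≤ d)
    (hns : ∀ v : Fin 2 → F, v ≠ 0 → eval v (homogeneousComponent d f) ≠ 0) :
    ¬ f ∣ svPoly Q f := by
  classical
  have hQ2 : 1 < Q := hQ ▸ Fintype.one_lt_card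
  obtain ⟨d', rfl⟩ : ∃ d', d = d' + 1 := Nat.exists_eq_succ_of_ne_zero (by
    rintro rfl
    simp at hd)
  rintro ⟨h, hh⟩
  have hv : (![1, 0] : Fin 2 → F) ≠ 0 := fun h => by simpa using congrFun h 0
  set F0 := homogeneousComponent (d' + 1) f with hF0
  have hF0h : F0.IsHomogeneous (d' + 1) := homogeneousComponent_isHomogeneous _ _
  have hfd : f.totalDegree = d' + 1 := by
    by_contra hne
    exact hns _ hv (by rw [hF0, homogeneousComponent_eq_zero _ _ (lt_of_le_of_ne hf hne), map_zero])
  have hf0 : f ≠ 0 := by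
    rintro rfl
    simp at hfd
  have hgd := svPoly_totalDegree Q d' hQ2.le f hf
  have hhd : h.totalDegree ≤ Q - 1 := by
    by_cases h0 : h = 0
    · simp [h0]
    rw [hh, totalDegree_mul_of_isDomain hf0 h0, hfd] at hgd
    omega
  have e1 := hc_mul f h (d' + 1) (Q - 1) hf hhd
  have e2 : homogeneousComponent (Q + d') (svPoly Q f) = ∑ i, X i ^ Q * pderiv i F0 := by
    rw [svPoly, map_sum]
    refine Finset.sum_congr rfl fun i _ => ?_
    rw [hc_mul _ _ _ _ _ (totalDegree_pderiv_le f d' i hf), hc_pderiv, map_sub,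
      homogeneousComponent_eq_self (isHomogeneous_X_pow i Q),
      homogeneousComponent_eq_zero, sub_zero]
    · simpa using hQ2
    · refine (totalDegree_sub _ _).trans ?_
      rw [totalDegree_X_pow, totalDegree_X]
      simpa using hQ2.le
  rw [← hh, show d' + 1 + (Q - 1) = Q + d' by omega, e2, ← hF0] at e1
  have e3 := hF0h.sum_X_mul_pderiv
  set φ := lineR (![0, 1] : Fin 2 → F) ![1, 0] with hφ
  have hX0 : φ (X 0) = Polynomial.X := by simp [hφ, lineR]
  have hX1 : φ (X 1) = 1 := by simp [hφ, lineR]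
  have e1' := congrArg φ e1
  have e3' := congrArg φ e3
  simp only [Fin.sum_univ_two, map_add, map_mul, map_pow, hX0, hX1, one_pow, one_mul,
    map_nsmul] at e1' e3'
  rw [hφ, ← deriv_chain, ← hφ] at e1' e3'
  set u := φ F0 with hu
  have hdd : ((d' + 1) • u) = u := by
    rw [nsmul_eq_mul, ← Polynomial.C_eq_natCast, hd, Polynomial.C_1, one_mul]
  rw [hdd] at e3'
  have e4 : (Polynomial.X ^ Q - Polynomial.X) * Polynomial.derivative u
      = u * (φ (homogeneousComponent (Q - 1) h) - 1) := by
    linear_combination e1' - e3'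
  have hcop : IsCoprime u (Polynomial.X ^ Q - Polynomial.X) := by
    rw [← hQ, ← aux_prod_X_sub]
    refine IsCoprime.prod_right fun a _ => ?_
    refine ((Polynomial.irreducible_X_sub_C a).coprime_iff_not_dvd.mpr ?_).symm
    rw [Polynomial.dvd_iff_isRoot, Polynomial.IsRoot, hu, hφ, lineR_eval]
    refine hns _ fun h => ?_
    simpa using congrFun h 1
  have hdvd : u ∣ Polynomial.derivative u := hcop.dvd_of_dvd_mul_left ⟨_, e4⟩
  have hc : u.coeff (d' + 1) ≠ 0 := by
    rw [hu, hφ, lineR_coeff _ _ _ _ hF0h.totalDegree_le, homogeneousComponent_eq_self hF0h]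
    exact hns _ hv
  have hu0 : u ≠ 0 := by
    intro h
    simp [h] at hc
  have hud : u.natDegree = d' + 1 :=
    le_antisymm (lineR_natDegree _ _ _ _ hF0h.totalDegree_le) (Polynomial.le_natDegree_of_ne_zero hc)
  have hder : Polynomial.derivative u = 0 :=
    Polynomial.eq_zero_of_dvd_of_natDegree_lt hdvd
      (lt_of_le_of_lt (Polynomial.natDegree_derivative_le u) (by omega))
  have := congrArg (fun p => Polynomial.coeff p d') hder
  simp only [Polynomial.coeff_derivative, Polynomial.coeff_zero] at this
  apply hc
  push_cast at hd
  rw [hd, mul_one] at this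
  exact this

lemma finrank_V (F : Type) [Field F] (k : ℕ) :
    finrank F (restrictTotalDegree (Fin 2) F k) * 2 = (k + 1) * (k + 2) := by
  classical
  have h1 : finrank F (restrictTotalDegree (Fin 2) F k) =
      Nat.card {n : Fin 2 →₀ ℕ | (n.sum fun _ e => e) ≤ k} :=
    finrank_eq_nat_card_basis (basisRestrictSupport F _)
  let T := (Finset.range (k + 1)).biUnion (fun i => Finset.HasAntidiagonal.antidiagonal i)
  have hT : T.card * 2 = (k + 1) * (k + 2) := by
    have : T.card = ∑ i ∈ Finset.range (k + 1), (i + 1) := by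
      rw [Finset.card_biUnion]
      · simp
      · intro i _ j _ hij
        refine Finset.disjoint_left.mpr fun x hx hy => hij ?_
        rw [Finset.HasAntidiagonal.mem_antidiagonal] at hx hy
        omega
    rw [this]
    clear this T h1
    induction k with
    | zero => simp
    | succ n ih => rw [Finset.sum_range_succ, add_mul, ih]; ring
  have h2 : Nat.card {n : Fin 2 →₀ ℕ | (n.sum fun _ e => e) ≤ k} = Nat.card T := by
    refine Nat.card_congr (((Finsupp.equivFunOnFinite (α := Fin 2) (M := ℕ)).trans
      (finTwoArrowEquiv ℕ)).subtypeEquiv ?_)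
    intro n
    have : (n.sum fun _ e => e) = n 0 + n 1 := by
      rw [Finsupp.sum_fintype _ _ (by simp), Fin.sum_univ_two]
    simp [T, this]
  rw [h1, h2]
  simpa using hT

/-- value and directional derivative at a point -/
noncomputable def jetM {F : Type} [Field F] (P t : Fin 2 → F) :
    MvPolynomial (Fin 2) F →ₗ[F] F × F :=
  LinearMap.prod (aeval P).toLinearMap
    (∑ i, t i • ((aeval P).toLinearMap ∘ₗ (pderiv i).toLinearMap))

lemma jetM_apply {F : Type} [Field F] (P t : Fin 2 → F) (p : MvPolynomial (Fin 2) F) :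
    jetM P t p = (eval P p, ∑ i, t i * eval P (pderiv i p)) := by
  simp [jetM, MvPolynomial.aeval_eq_eval]

lemma jetM_mul {F : Type} [Field F] (P t : Fin 2 → F) (p r : MvPolynomial (Fin 2) F) :
    jetM P t (p * r) = ((jetM P t p).1 * (jetM P t r).1,
      (jetM P t p).1 * (jetM P t r).2 + (jetM P t p).2 * (jetM P t r).1) := by
  simp only [jetM_apply, pderiv_mul, map_add, map_mul, Fin.sum_univ_two, Prod.mk.injEq, true_and]
  ring

lemma jet_surj {F : Type} [Field F] [Fintype F] (Z : Finset (Fin 2 → F))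
    (t : (Fin 2 → F) → (Fin 2 → F)) (ht : ∀ P ∈ Z, t P ≠ 0) :
    Function.Surjective (LinearMap.pi (fun P : Z => jetM (P : Fin 2 → F) (t P))) := by
  classical
  have key : ∀ (P : Z) (w : F × F), ∃ φ : MvPolynomial (Fin 2) F,
      jetM (P : Fin 2 → F) (t P) φ = w ∧ ∀ P' : Z, P' ≠ P → jetM (P' : Fin 2 → F) (t P') φ = 0 := by
    intro P w
    obtain ⟨i, hi⟩ : ∃ i, t P i ≠ 0 := by
      by_contra! h
      exact ht P P.2 (funext h)
    set I := indicator (P : Fin 2 → F) with hI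
    set γ := (jetM (P : Fin 2 → F) (t P) (I * I)).2 with hγ
    refine ⟨(I * I) * (C w.1 + C ((w.2 - w.1 * γ) / t P i) * (X i - C ((P : Fin 2 → F) i))), ?_, ?_⟩
    · rw [jetM_mul]
      have h1 : (jetM (P : Fin 2 → F) (t P) (I * I)).1 = 1 := by
        rw [jetM_apply]
        simp [hI, eval_indicator_apply_eq_one]
      have h2 : jetM (P : Fin 2 → F) (t P)
          (C w.1 + C ((w.2 - w.1 * γ) / t P i) * (X i - C ((P : Fin 2 → F) i))) =
          (w.1, w.2 - w.1 * γ) := by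
        rw [jetM_apply]
        ext
        · simp
        · generalize w.2 - w.1 * γ = δ
          obtain rfl | rfl : i = 0 ∨ i = 1 := by omega
          · simp [pderiv_X, Pi.single_apply]
            field_simp
          · simp [pderiv_X, Pi.single_apply]
            field_simp
      rw [h1, h2, ← hγ]
      ext <;> simp
      ring
    · intro P' hP'
      have h0 : eval (P' : Fin 2 → F) I = 0 :=
        eval_indicator_apply_eq_zero _ _ (fun h => hP' (Subtype.ext h))
      rw [jetM_mul, jetM_mul]
      have : (jetM (P' : Fin 2 → F) (t P') I).1 = 0 := by rw [jetM_apply]; exact h0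
      simp [this]
  choose φ h1 h2 using key
  intro w
  refine ⟨∑ P, φ P (w P), ?_⟩
  funext P
  rw [LinearMap.pi_apply, map_sum, Finset.sum_eq_single P, h1]
  · intro P' _ hne
    exact h2 P' _ P hne.symm
  · simp

lemma bezout2 {F : Type} [Field F] [Fintype F] (f g : MvPolynomial (Fin 2) F) (hf : Prime f)
    (d e : ℕ) (hfd : f.totalDegree = d) (hg : g.totalDegree ≤ e) (hnd : ¬ f ∣ g)
    (Z : Finset (Fin 2 → F)) (t : (Fin 2 → F) → (Fin 2 → F)) (ht : ∀ P ∈ Z, t P ≠ 0)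
    (hZf : ∀ P ∈ Z, jetM P (t P) f = 0) (hZg : ∀ P ∈ Z, jetM P (t P) g = 0) :
    2 * Z.card ≤ d * e := by
  classical
  set ev := LinearMap.pi (fun P : Z => jetM (P : Fin 2 → F) (t P)) with hev
  have hs : Function.Surjective ev := jet_surj Z t ht
  choose ψ hψ using hs
  set m := Finset.univ.sup (fun w => (ψ w).totalDegree) with hm
  set k := m + d + e with hk
  set V := restrictTotalDegree (Fin 2) F with hV
  have hsk : Function.Surjective (ev.domRestrict (V k)) := by
    intro w
    have : (ψ w).totalDegree ≤ m := Finset.le_sup (f := fun w => (ψ w).totalDegree) (Finset.mem_univ w)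
    exact ⟨⟨ψ w, (mem_restrictTotalDegree _ _ _).2 (by omega)⟩, hψ w⟩
  have r1 := LinearMap.finrank_range_add_finrank_ker (ev.domRestrict (V k))
  rw [LinearMap.range_eq_top.mpr hsk, finrank_top] at r1
  have r1' : finrank F (Z → F × F) = 2 * Z.card := by
    rw [finrank_pi_fintype]
    simp [mul_comm]
  have hmem : ∀ (x : V (m + e) × V (m + d)), (x.1 : MvPolynomial (Fin 2) F) * f + x.2 * g ∈ V k := by
    rintro ⟨⟨a, ha⟩, ⟨b, hb⟩⟩
    rw [hV, mem_restrictTotalDegree] at *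
    dsimp only
    refine (totalDegree_add _ _).trans (max_le ?_ ?_)
    · exact (totalDegree_mul _ _).trans (by omega)
    · exact (totalDegree_mul _ _).trans (by omega)
  let μ : (V (m + e) × V (m + d)) →ₗ[F] V k :=
    { toFun := fun x => ⟨x.1 * f + x.2 * g, hmem x⟩
      map_add' := fun x y => by
        ext1
        simp
        ring
      map_smul' := fun c x => by
        ext1
        simp }
  have hmem2 : ∀ c : V m, -(g * c) ∈ V (m + e) ∧ f * c ∈ V (m + d) := by
    rintro ⟨c, hc⟩
    rw [hV, mem_restrictTotalDegree] at *
    rw [mem_restrictTotalDegree, totalDegree_neg]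
    dsimp only
    exact ⟨(totalDegree_mul _ _).trans (by omega), (totalDegree_mul _ _).trans (by omega)⟩
  let ν : V m →ₗ[F] (V (m + e) × V (m + d)) :=
    { toFun := fun c => (⟨-(g * c), (hmem2 c).1⟩, ⟨f * c, (hmem2 c).2⟩)
      map_add' := fun x y => by
        ext1 <;> ext1 <;> simp <;> ring
      map_smul' := fun c x => by
        ext1 <;> ext1 <;> simp }
  have r2 := LinearMap.finrank_range_add_finrank_ker μ
  rw [finrank_prod] at r2
  have h3 : LinearMap.range μ ≤ LinearMap.ker (ev.domRestrict (V k)) := by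
    rintro _ ⟨x, rfl⟩
    rw [LinearMap.mem_ker]
    funext P
    show jetM (P : Fin 2 → F) (t P) (x.1 * f + x.2 * g) = 0
    rw [map_add, jetM_mul, jetM_mul, hZf P P.2, hZg P P.2]
    simp
  have h4 : LinearMap.ker μ ≤ LinearMap.range ν := by
    rintro ⟨⟨a, ha⟩, ⟨b, hb⟩⟩ hx
    have hx' : a * f + b * g = 0 := congrArg Subtype.val (LinearMap.mem_ker.mp hx)
    have hdv : f ∣ b * g := ⟨-a, by linear_combination hx'⟩
    obtain ⟨c, rfl⟩ := (hf.dvd_or_dvd hdv).resolve_right hnd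
    have hc : c ∈ V m := by
      rw [hV, mem_restrictTotalDegree] at *
      by_cases h0 : c = 0
      · simp [h0]
      rw [totalDegree_mul_of_isDomain hf.ne_zero h0] at hb
      omega
    refine ⟨⟨c, hc⟩, ?_⟩
    have ha' : a = -(g * c) := by
      apply mul_left_cancel₀ hf.ne_zero
      linear_combination hx'
    subst ha'
    rfl
  have i3 := Submodule.finrank_mono h3
  have i4 := Submodule.finrank_mono h4
  have i5 := LinearMap.finrank_range_le ν
  have v1 := finrank_V F k
  have v2 := finrank_V F (m + e)
  have v3 := finrank_V F (m + d)
  have v4 := finrank_V F m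
  rw [← hV] at v1 v2 v3 v4
  rw [r1'] at r1
  have : 2 * Z.card + finrank F (V (m + e)) + finrank F (V (m + d)) ≤
      finrank F (V k) + finrank F (V m) := by omega
  rw [hk] at v1 this
  nlinarith

lemma pencil {F : Type} [Field F] [Fintype F] [DecidableEq F] (p : MvPolynomial (Fin 2) F) (d : ℕ)
    (hd : 1 ≤ d) (hp : p.totalDegree ≤ d)
    (hl : ∀ c v : Fin 2 → F, v ≠ 0 → lineR c v p ≠ 0) :
    (Finset.univ.filter (fun P : Fin 2 → F => eval P p = 0)).card ≤
      1 + (Fintype.card F + 1) * (d - 1) := by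
  classical
  set Z := Finset.univ.filter (fun P : Fin 2 → F => eval P p = 0) with hZ
  rcases Z.eq_empty_or_nonempty with h | ⟨P, hP⟩
  · simp [h]
  have hPZ : eval P p = 0 := by simpa [hZ] using hP
  have hc := Finset.card_erase_of_mem hP
  let r : F → (Fin 2 → F) → Prop := fun s v => eval (P + s • v) p = 0
  have hdc := Finset.sum_card_bipartiteAbove_eq_sum_card_bipartiteBelow
    (s := Finset.univ.erase (0 : F)) (t := Finset.univ.erase (0 : Fin 2 → F)) r
  have hlow : (Finset.univ.erase (0 : F)).card * (Z.erase P).card ≤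
      ∑ a ∈ Finset.univ.erase (0 : F),
        (Finset.bipartiteAbove r (Finset.univ.erase (0 : Fin 2 → F)) a).card := by
    rw [← smul_eq_mul]
    refine Finset.card_nsmul_le_sum _ _ _ fun s hs => ?_
    have hs0 : s ≠ 0 := by simpa using hs
    refine Finset.card_le_card_of_injOn (fun R => s⁻¹ • (R - P)) ?_ ?_
    · intro R hR
      have hR' : R ≠ P ∧ eval R p = 0 := by
        rw [Finset.mem_coe, Finset.mem_erase, hZ, Finset.mem_filter] at hR
        exact ⟨hR.1, hR.2.2⟩
      simp [Finset.bipartiteAbove, r, hs0, sub_eq_zero, hR'.1, hR'.2]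
    · intro R _ R' _ h
      have := smul_right_injective _ (inv_ne_zero hs0) h
      simpa using this
  have hup : ∑ b ∈ Finset.univ.erase (0 : Fin 2 → F),
        (Finset.bipartiteBelow r (Finset.univ.erase (0 : F)) b).card ≤
      (Finset.univ.erase (0 : Fin 2 → F)).card * (d - 1) := by
    rw [← smul_eq_mul]
    refine Finset.sum_le_card_nsmul _ _ _ fun v hv => ?_
    have hv0 : v ≠ 0 := by simpa using hv
    have hne := hl P v hv0
    have hsub : Finset.bipartiteBelow r (Finset.univ.erase (0 : F)) v ⊆
        (lineR P v p).roots.toFinset.erase 0 := by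
      intro s hs
      have hs' : s ≠ 0 ∧ eval (P + s • v) p = 0 := by simpa [Finset.bipartiteBelow, r] using hs
      simp [hs'.1, hne, Polynomial.IsRoot, lineR_eval, hs'.2]
    have h0 : (0 : F) ∈ (lineR P v p).roots.toFinset := by
      simp [hne, Polynomial.IsRoot, lineR_eval, hPZ]
    have h1 := Finset.card_le_card hsub
    rw [Finset.card_erase_of_mem h0] at h1
    have h2 := (Multiset.toFinset_card_le (lineR P v p).roots).trans
      ((Polynomial.card_roots' _).trans (lineR_natDegree P v p d hp))
    omega
  have := (hlow.trans hdc.le).trans hup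
  rw [Finset.card_erase_of_mem (Finset.mem_univ _), Finset.card_erase_of_mem (Finset.mem_univ _),
    Finset.card_univ, Finset.card_univ, Fintype.card_fun, Fintype.card_fin] at this
  have hF : 1 < Fintype.card F := Fintype.one_lt_card
  obtain ⟨n, hn⟩ : ∃ n, Fintype.card F = n + 2 := ⟨Fintype.card F - 2, by omega⟩
  rw [hn] at this ⊢
  have e1 : (n + 2) ^ 2 - 1 = (n + 1) * (n + 3) := by
    rw [Nat.sub_eq_iff_eq_add (Nat.one_le_two_pow.trans (Nat.pow_le_pow_left (by omega) 2))]; ring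
  rw [e1, show n + 2 - 1 = n + 1 by omega, mul_assoc] at this
  have := Nat.le_of_mul_le_mul_left this (by omega)
  have hpos : 0 < Z.card := Finset.card_pos.mpr ⟨P, hP⟩
  rw [show n + 2 + 1 = n + 3 by omega]
  omega

lemma jet_sv {F : Type} [Field F] [Fintype F] (f : MvPolynomial (Fin 2) F) (P t : Fin 2 → F)
    (h : jetM P t f = 0) : jetM P t (svPoly (Fintype.card F) f) = 0 := by
  rw [jetM_apply] at h
  have h2 := congrArg Prod.snd h
  simp only [Prod.snd_zero, Fin.sum_univ_two] at h2
  have hQ0 : ((Fintype.card F : ℕ) : F) = 0 := Nat.cast_card_eq_zero F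
  rw [jetM_apply]
  ext
  · simp [svPoly, FiniteField.pow_card]
  · simp [svPoly, FiniteField.pow_card, Fin.sum_univ_two, pderiv_X, Pi.single_apply, hQ0]
    linear_combination -h2

lemma plane_bound {F : Type} [Field F] [Fintype F] [DecidableEq F] (q : ℕ) (hq : 2 < q)
    (hF : Fintype.card F = q ^ 2) (f : MvPolynomial (Fin 2) F) (hf : f.totalDegree ≤ q + 1)
    (hns : ∀ v : Fin 2 → F, v ≠ 0 → eval v (homogeneousComponent (q + 1) f) ≠ 0) :
    (Finset.univ.filter (fun P : Fin 2 → F => eval P f = 0)).card + 1 ≤ q ^ 3 := by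
  classical
  have hq0 : (q : F) = 0 := by
    have : ((Fintype.card F : ℕ) : F) = 0 := Nat.cast_card_eq_zero F
    rw [hF] at this
    push_cast at this
    exact pow_eq_zero_iff (by norm_num) |>.mp this
  have hd1 : ((q + 1 : ℕ) : F) = 1 := by push_cast; rw [hq0, zero_add]
  have hv : (![1, 0] : Fin 2 → F) ≠ 0 := fun h => by simpa using congrFun h 0
  have hfd : f.totalDegree = q + 1 := by
    by_contra hne
    exact hns _ hv (by rw [homogeneousComponent_eq_zero _ _ (lt_of_le_of_ne hf hne), map_zero])
  have hf0 : f ≠ 0 := by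
    rintro rfl
    simp at hfd
  have hu : ¬ IsUnit f := by
    intro hu
    have := (isUnit_iff_totalDegree_of_isReduced.mp hu).2
    omega
  have hl : ∀ c v : Fin 2 → F, v ≠ 0 → lineR c v f ≠ 0 := by
    intro c v hv h
    have := lineR_coeff c v f (q + 1) hf
    rw [h, Polynomial.coeff_zero] at this
    exact hns v hv this.symm
  set Z := Finset.univ.filter (fun P : Fin 2 → F => eval P f = 0) with hZ
  by_cases hirr : Irreducible f
  · have hnd := not_dvd_sv (q ^ 2) (q + 1) hF hd1 f hf hns
    have hgd := svPoly_totalDegree (q ^ 2) q (by nlinarith) f hf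
    let t : (Fin 2 → F) → (Fin 2 → F) := fun P =>
      if eval P (pderiv 0 f) = 0 ∧ eval P (pderiv 1 f) = 0 then ![1, 0]
      else ![- eval P (pderiv 1 f), eval P (pderiv 0 f)]
    have ht : ∀ P ∈ Z, t P ≠ 0 := by
      intro P _
      simp only [t]
      split_ifs with h
      · exact hv
      · intro h0
        apply h
        have h1 := congrFun h0 0
        have h2 := congrFun h0 1
        simp at h1 h2
        exact ⟨h2, h1⟩
    have hZf : ∀ P ∈ Z, jetM P (t P) f = 0 := by
      intro P hP
      have hP0 : eval P f = 0 := by simpa [hZ] using hP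
      rw [jetM_apply]
      ext
      · simpa using hP0
      · simp only [t, Fin.sum_univ_two]
        split_ifs with h
        · simp [h.1, h.2]
        · simp
          ring
    have := bezout2 f _ hirr.prime (q + 1) (q ^ 2 + q) hfd hgd hnd Z t ht hZf
      (fun P hP => hF ▸ jet_sv f P (t P) (hZf P hP))
    obtain ⟨n, rfl⟩ : ∃ n, q = n + 3 := ⟨q - 3, by omega⟩
    nlinarith [sq_nonneg n, Nat.zero_le (n ^ 3)]
  · rw [irreducible_iff] at hirr
    push Not at hirr
    obtain ⟨a, b, hab, ha, hb⟩ := hirr hu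
    have ha0 : a ≠ 0 := by rintro rfl; simp [hab] at hf0
    have hb0 : b ≠ 0 := by rintro rfl; simp [hab] at hf0
    have hdeg : ∀ c : MvPolynomial (Fin 2) F, c ≠ 0 → ¬ IsUnit c → 1 ≤ c.totalDegree := by
      intro c hc hcu
      by_contra h
      have h0 : c.totalDegree = 0 := by omega
      rw [totalDegree_eq_zero_iff_eq_C] at h0
      apply hcu
      rw [h0]
      refine IsUnit.map _ (isUnit_iff_ne_zero.mpr ?_)
      intro h1
      rw [h1, map_zero] at h0
      exact hc h0
    have hda := hdeg a ha0 ha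
    have hdb := hdeg b hb0 hb
    have hsum : a.totalDegree + b.totalDegree = q + 1 := by
      rw [← totalDegree_mul_of_isDomain ha0 hb0, ← hab, hfd]
    have pa := pencil a _ hda le_rfl (fun c v hv h => hl c v hv (by rw [hab, map_mul, h, zero_mul]))
    have pb := pencil b _ hdb le_rfl (fun c v hv h => hl c v hv (by rw [hab, map_mul, h, mul_zero]))
    have hsub : Z ⊆ Finset.univ.filter (fun P : Fin 2 → F => eval P a = 0) ∪
        Finset.univ.filter (fun P : Fin 2 → F => eval P b = 0) := by
      intro P hP
      simpa [hZ, hab] using hP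
    have hcard := (Finset.card_le_card hsub).trans (Finset.card_union_le _ _)
    rw [hF] at pa pb
    obtain ⟨x, hx⟩ : ∃ x, a.totalDegree = x + 1 := ⟨a.totalDegree - 1, by omega⟩
    obtain ⟨y, hy⟩ : ∃ y, b.totalDegree = y + 1 := ⟨b.totalDegree - 1, by omega⟩
    rw [hx, Nat.add_sub_cancel] at pa
    rw [hy, Nat.add_sub_cancel] at pb
    have hxy : q = x + y + 1 := by omega
    have : Z.card ≤ 2 + (q ^ 2 + 1) * (x + y) := by
      calc Z.card ≤ _ := hcard
        _ ≤ _ := add_le_add pa pb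
        _ = _ := by ring
    obtain ⟨n, rfl⟩ : ∃ n, q = n + 3 := ⟨q - 3, by omega⟩
    rw [show x + y = n + 2 by omega] at this
    nlinarith [sq_nonneg n, Nat.zero_le (n ^ 3)]

lemma eval_smul_hom {σ F : Type} [Field F] (f : MvPolynomial σ F) (d : ℕ)
    (hf : f.IsHomogeneous d) (a : F) (v : σ → F) : eval (a • v) f = a ^ d * eval v f := by
  rw [eval_eq, eval_eq, Finset.mul_sum]
  refine Finset.sum_congr rfl fun m hm => ?_
  have : ∑ i ∈ m.support, m i = d := by
    have := hf (MvPolynomial.mem_support_iff.mp hm)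
    have h2 := Finsupp.degree_eq_weight_one (R := ℕ) (σ := σ)
    have h3 : Finsupp.degree m = d := by
      rw [← this, h2]
      rfl
    exact h3
  simp only [Pi.smul_apply, smul_eq_mul, mul_pow, Finset.prod_mul_distrib, Finset.prod_pow_eq_pow_sum,
    this]
  ring

lemma totalDegree_aeval_affine {σ τ F : Type} [Field F] (f : MvPolynomial σ F) (d : ℕ)
    (hf : f.totalDegree ≤ d) (l : σ → MvPolynomial τ F) (hl : ∀ i, (l i).totalDegree ≤ 1) :
    (aeval l f).totalDegree ≤ d := by
  rw [aeval_def, eval₂_eq]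
  refine totalDegree_finsetSum_le fun m hm => ?_
  refine (totalDegree_mul _ _).trans ?_
  rw [MvPolynomial.algebraMap_eq, totalDegree_C, zero_add]
  refine (totalDegree_finsetProd _ _).trans (le_trans ?_ ((le_totalDegree hm).trans hf))
  refine Finset.sum_le_sum fun i _ => (totalDegree_pow _ _).trans ?_
  exact (Nat.mul_le_mul_left _ (hl i)).trans (by simp)

lemma affine_plane_bound {n : ℕ} {F : Type} [Field F] [Fintype F] [DecidableEq F] (q : ℕ) (hq : 2 < q)
    (hF : Fintype.card F = q ^ 2) (f : MvPolynomial (Fin n) F) (hf : f.IsHomogeneous (q + 1))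
    (A B : Fin n → F)
    (hns : ∀ v : Fin 2 → F, v ≠ 0 → eval (v 0 • A + v 1 • B) f ≠ 0) (c : Fin n → F) :
    (Finset.univ.filter (fun P : Fin 2 → F => eval (c + (P 0 • A + P 1 • B)) f = 0)).card + 1
      ≤ q ^ 3 := by
  let l : Fin n → MvPolynomial (Fin 2) F := fun i => C (c i) + (C (A i) * X 0 + C (B i) * X 1)
  have hld : ∀ i, (l i).totalDegree ≤ 1 := by
    intro i
    refine (totalDegree_add _ _).trans (max_le (by simp) ((totalDegree_add _ _).trans (max_le ?_ ?_)))
    · exact (totalDegree_mul _ _).trans (by simp)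
    · exact (totalDegree_mul _ _).trans (by simp)
  have hd := totalDegree_aeval_affine f (q + 1) hf.totalDegree_le l hld
  have hev : ∀ P : Fin 2 → F, eval P (aeval l f) = eval (c + (P 0 • A + P 1 • B)) f := by
    intro P
    have : (aeval P).comp (aeval l) =
        (aeval (c + (P 0 • A + P 1 • B)) : MvPolynomial (Fin n) F →ₐ[F] F) := by
      ext i
      simp [l]
      ring
    have := DFunLike.congr_fun this f
    simpa [MvPolynomial.aeval_eq_eval] using this
  have := plane_bound q hq hF (aeval l f) hd (by
    intro v hv
    rw [← lineR_coeff 0 v _ _ hd]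
    have h1 : (lineR 0 v).comp (aeval l) = lineR c (v 0 • A + v 1 • B) := by
      ext1 i
      simp [lineR, l]
      ring
    have h2 := DFunLike.congr_fun h1 f
    rw [AlgHom.comp_apply] at h2
    rw [h2, lineR_coeff _ _ _ _ hf.totalDegree_le, homogeneousComponent_eq_self hf]
    exact hns v hv)
  simpa only [hev] using this

lemma proj_card {n : ℕ} {F : Type} [Field F] [Fintype F] (C : (Fin n → F) → Prop)
    (hC : ∀ (a : F) v, a ≠ 0 → (C (a • v) ↔ C v)) :
    Nat.card {v : Fin n → F // v ≠ 0 ∧ C v} =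
      {P : Projectivization F (Fin n → F) | C P.rep}.ncard * (Fintype.card F - 1) := by
  classical
  rw [← Nat.card_coe_set_eq, ← Fintype.card_units, ← Nat.card_eq_fintype_card, ← Nat.card_prod]
  symm
  refine Nat.card_eq_of_bijective
    (fun x => ⟨(x.2 : F) • (x.1 : Projectivization F (Fin n → F)).rep,
      smul_ne_zero x.2.ne_zero (Projectivization.rep_nonzero _),
      (hC _ _ x.2.ne_zero).mpr x.1.2⟩) ⟨?_, ?_⟩
  · rintro ⟨⟨P, hP⟩, a⟩ ⟨⟨R, hR⟩, b⟩ h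
    have h' : (a : F) • P.rep = (b : F) • R.rep := congrArg Subtype.val h
    have hPR : P = R := by
      rw [← P.mk_rep, ← R.mk_rep, Projectivization.mk_eq_mk_iff]
      refine ⟨a⁻¹ * b, ?_⟩
      rw [mul_smul, inv_smul_eq_iff]
      exact h'.symm
    subst hPR
    have : (a : F) = b := smul_left_injective F P.rep_nonzero h'
    have : a = b := Units.ext this
    subst this
    rfl
  · rintro ⟨v, hv, hCv⟩
    obtain ⟨a, ha⟩ := Projectivization.exists_smul_eq_mk_rep F v hv
    have ha' : (a : F) • v = (Projectivization.mk F v hv).rep := ha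
    refine ⟨⟨⟨Projectivization.mk F v hv, ?_⟩, a⁻¹⟩, ?_⟩
    · show C _
      rw [← ha']
      exact (hC _ _ a.ne_zero).mpr hCv
    · apply Subtype.ext
      show ((a⁻¹ : Fˣ) : F) • (Projectivization.mk F v hv).rep = v
      rw [← ha', smul_smul]
      simp

lemma card_add_zero {n : ℕ} {F : Type} [Field F] [Fintype F] (C : (Fin n → F) → Prop)
    (h0 : C 0) : Nat.card {v : Fin n → F // C v} = Nat.card {v : Fin n → F // v ≠ 0 ∧ C v} + 1 := by
  classical
  rw [Nat.card_eq_fintype_card, Nat.card_eq_fintype_card, Fintype.card_subtype, Fintype.card_subtype]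
  have : Finset.univ.filter (fun v : Fin n → F => v ≠ 0 ∧ C v) =
      (Finset.univ.filter (fun v : Fin n → F => C v)).erase 0 := by
    ext v
    simp
  rw [this, Finset.card_erase_add_one]
  simpa using h0

lemma no_external {F : Type} [Field F] [Fintype F] (q : ℕ) (hq : 2 < q)
    (hF : Fintype.card F = q ^ 2) (f : MvPolynomial (Fin 7) F) (hf : f.IsHomogeneous (q + 1))
    (W : Submodule F (Fin 7 → F)) (hW : finrank F W = 4)
    (hN : Nat.card {v : Fin 7 → F // eval v f = 0} + q ^ 7 = q ^ 13 + q ^ 6)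
    (hM : Nat.card {v : Fin 7 → F // v ∈ W ∧ eval v f = 0} = q ^ 6)
    (A B : Fin 7 → F) (hA : A ∈ W) (hB : B ∈ W) :
    ∃ v : Fin 2 → F, v ≠ 0 ∧ eval (v 0 • A + v 1 • B) f = 0 := by
  classical
  by_contra! hns
  have hb := affine_plane_bound q hq hF f hf A B hns
  rw [Nat.card_eq_fintype_card, Fintype.card_subtype] at hN hM
  set O := Finset.univ.filter (fun v : Fin 7 → F => v ∉ W) with hO
  have hOc : O.card + q ^ 8 = q ^ 14 := by
    have h1 : Nat.card W = q ^ 8 := by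
      rw [Module.natCard_eq_pow_finrank (K := F), hW, Nat.card_eq_fintype_card, hF]; ring
    have h2 := Finset.card_filter_add_card_filter_not (s := (Finset.univ : Finset (Fin 7 → F))) (fun v => v ∈ W)
    rw [Finset.card_univ, Fintype.card_fun, hF, Fintype.card_fin] at h2
    have h3 : (Finset.univ.filter (fun v : Fin 7 → F => v ∈ W)).card = q ^ 8 := by
      rw [← h1, Nat.card_eq_fintype_card, ← Fintype.card_subtype]
    rw [h3] at h2
    rw [add_comm, hO, h2]; ring
  set Y := O.filter (fun v => eval v f = 0) with hY
  have hYc : Y.card + q ^ 7 = q ^ 13 := by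
    have h2 := Finset.card_filter_add_card_filter_not
      (s := Finset.univ.filter (fun v : Fin 7 → F => eval v f = 0)) (fun v => v ∈ W)
    have e1 : (Finset.univ.filter (fun v : Fin 7 → F => eval v f = 0)).filter (fun v => v ∈ W) =
        Finset.univ.filter (fun v : Fin 7 → F => v ∈ W ∧ eval v f = 0) := by
      ext v; simp [and_comm]
    have e2 : (Finset.univ.filter (fun v : Fin 7 → F => eval v f = 0)).filter (fun v => ¬ v ∈ W) = Y := by
      ext v; simp [hY, hO, and_comm]
    rw [e1, e2] at h2
    omega
  let r : (Fin 7 → F) → (Fin 2 → F) → Prop := fun c P => eval (c + (P 0 • A + P 1 • B)) f = 0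
  have hdc := Finset.sum_card_bipartiteAbove_eq_sum_card_bipartiteBelow
    (s := O) (t := (Finset.univ : Finset (Fin 2 → F))) r
  have hup : ∑ c ∈ O, (Finset.bipartiteAbove r (Finset.univ : Finset (Fin 2 → F)) c).card ≤
      O.card * (q ^ 3 - 1) := by
    rw [← smul_eq_mul]
    refine Finset.sum_le_card_nsmul _ _ _ fun c _ => ?_
    have := hb c
    simp only [Finset.bipartiteAbove, r]
    omega
  have hlow : (Finset.univ : Finset (Fin 2 → F)).card * Y.card ≤
      ∑ P ∈ (Finset.univ : Finset (Fin 2 → F)), (Finset.bipartiteBelow r O P).card := by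
    rw [← smul_eq_mul]
    refine Finset.card_nsmul_le_sum _ _ _ fun P _ => ?_
    refine Finset.card_le_card_of_injOn (fun y => y - (P 0 • A + P 1 • B)) ?_ ?_
    · intro y hy
      have hy' : y ∉ W ∧ eval y f = 0 := by simpa [hY, hO] using hy
      have hm : P 0 • A + P 1 • B ∈ W := W.add_mem (W.smul_mem _ hA) (W.smul_mem _ hB)
      simp only [Finset.bipartiteBelow, r, hO, Finset.coe_filter, Finset.mem_filter,
        Finset.mem_univ, true_and, Set.mem_ofPred_eq, sub_add_cancel]
      refine ⟨fun h => hy'.1 ?_, hy'.2⟩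
      simpa using W.add_mem h hm
    · intro y _ y' _ h
      simpa using h
  have := (hlow.trans hdc.symm.le).trans hup
  rw [Finset.card_univ, Fintype.card_fun, hF, Fintype.card_fin] at this
  obtain ⟨m, hm⟩ : ∃ m, q ^ 3 = m + 1 := Nat.exists_eq_succ_of_ne_zero (by positivity)
  rw [hm, Nat.add_sub_cancel] at this
  have hpos : 0 < O.card := by
    have : q ^ 8 < q ^ 14 := Nat.pow_lt_pow_right (by omega) (by norm_num)
    omega
  have e : (q ^ 2) ^ 2 * Y.card = q ^ 3 * O.card := by
    zify at hYc hOc ⊢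
    have h1 : (Y.card : ℤ) = q ^ 13 - q ^ 7 := by linarith
    have h2 : (O.card : ℤ) = q ^ 14 - q ^ 8 := by linarith
    rw [h1, h2]; ring
  rw [e, hm] at this
  nlinarith

/-- Under the hypotheses of the main theorem, if a solid `Σ₃` meets `S` in exactly
`q⁴ + q² + 1` rational points, then `S ∩ Σ₃` is a plane. -/
theorem stmt_8 (q : ℕ) (hq : ∃ p k : ℕ, p.Prime ∧ 0 < k ∧ q = p ^ k) (hq2 : 2 < q)
    (F : Type) [Field F] [Fintype F] (hcardF : Fintype.card F = q ^ 2)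
    (f : MvPolynomial (Fin 7) F) (hf0 : f ≠ 0) (hfdeg : f.IsHomogeneous (q + 1))
    (S : Set (Projectivization F (Fin 7 → F))) (hS : S = hypersurfacePts f)
    (hnosolid : ¬ ∃ W : Submodule F (Fin 7 → F), Module.finrank F W = 4 ∧ projPts W ⊆ S)
    (hcardS : S.ncard = q ^ 11 + q ^ 9 + q ^ 7 + q ^ 4 + q ^ 2 + 1)
    (W₃ : Submodule F (Fin 7 → F)) (hW₃ : Module.finrank F W₃ = 4)
    (hint : (S ∩ projPts W₃).ncard = q ^ 4 + q ^ 2 + 1) :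
    ∃ V : Submodule F (Fin 7 → F), Module.finrank F V = 3 ∧
      S ∩ projPts W₃ = projPts V := by
  classical
  have hsm : ∀ (a : F) v, a ≠ 0 → (eval (a • v) f = 0 ↔ eval v f = 0) := by
    intro a v ha
    rw [eval_smul_hom f _ hfdeg]
    simp [ha]
  have h00 : eval (0 : Fin 7 → F) f = 0 := by
    have := eval_smul_hom f _ hfdeg 0 (0 : Fin 7 → F)
    simpa using this
  have hsub : ∀ (P : Projectivization F (Fin 7 → F)) (W : Submodule F (Fin 7 → F)),
      P ∈ projPts W ↔ P.rep ∈ W := by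
    intro P W
    show P.submodule ≤ W ↔ _
    rw [Projectivization.submodule_eq, Submodule.span_singleton_le_iff_mem]
  have hQ : 1 ≤ q ^ 2 := Nat.one_le_pow _ _ (by omega)
  have hN : Nat.card {v : Fin 7 → F // eval v f = 0} + q ^ 7 = q ^ 13 + q ^ 6 := by
    rw [card_add_zero (fun v => eval v f = 0) h00, proj_card (fun v => eval v f = 0) hsm]
    have : {P : Projectivization F (Fin 7 → F) | eval P.rep f = 0} = S := hS.symm
    rw [this, hcardS, hcardF]
    zify [hQ]
    ring
  have hM : Nat.card {v : Fin 7 → F // v ∈ W₃ ∧ eval v f = 0} = q ^ 6 := by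
    rw [card_add_zero (fun v => v ∈ W₃ ∧ eval v f = 0) ⟨W₃.zero_mem, h00⟩,
      proj_card (fun v => v ∈ W₃ ∧ eval v f = 0) (fun a v ha => by
        rw [hsm a v ha, W₃.smul_mem_iff ha])]
    have : {P : Projectivization F (Fin 7 → F) | P.rep ∈ W₃ ∧ eval P.rep f = 0} =
        S ∩ projPts W₃ := by
      ext P
      rw [Set.mem_inter_iff, hsub, hS, and_comm]
      rfl
    rw [this, hint, hcardF]
    zify [hQ]
    ring
  have key := no_external q hq2 hcardF f hfdeg W₃ hW₃ hN hM
  have hadd : ∀ u w : Fin 7 → F, u ∈ W₃ → w ∈ W₃ → eval u f = 0 → eval w f = 0 →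
      eval (u + w) f = 0 := by
    intro u w hu hw hu0 hw0
    by_contra hr
    have hrW := W₃.add_mem hu hw
    let Θ : {v : Fin 7 → F // v ∈ W₃ ∧ eval v f = 0} × F → W₃ :=
      fun x => ⟨x.1 + x.2 • (u + w), W₃.add_mem x.1.2.1 (W₃.smul_mem _ hrW)⟩
    have hsurj : Function.Surjective Θ := by
      rintro ⟨v, hv⟩
      obtain ⟨t, ht, h⟩ := key (u + w) v hrW hv
      have hb : t 1 ≠ 0 := by
        intro hb
        rw [hb, zero_smul, add_zero] at h
        have ha : t 0 ≠ 0 := by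
          intro ha
          apply ht
          funext i
          fin_cases i <;> simp [ha, hb]
        exact hr ((hsm _ _ ha).mp h)
      refine ⟨⟨⟨(t 1)⁻¹ • (t 0 • (u + w) + t 1 • v), ?_, ?_⟩, -((t 1)⁻¹ * t 0)⟩, ?_⟩
      · exact W₃.smul_mem _ (W₃.add_mem (W₃.smul_mem _ hrW) (W₃.smul_mem _ hv))
      · exact (hsm _ _ (inv_ne_zero hb)).mpr h
      · apply Subtype.ext
        simp only [Θ]
        rw [smul_add, smul_smul, smul_smul, inv_mul_cancel₀ hb, one_smul, neg_smul]
        abel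
    have hcard : Nat.card ({v : Fin 7 → F // v ∈ W₃ ∧ eval v f = 0} × F) = Nat.card W₃ := by
      rw [Nat.card_prod, hM, Module.natCard_eq_pow_finrank (K := F) (V := W₃), hW₃,
        Nat.card_eq_fintype_card, hcardF]
      ring
    have hinj := ((Nat.bijective_iff_surjective_and_card Θ).mpr ⟨hsurj, hcard⟩).1
    have hw1 : eval (-w) f = 0 := by
      have := (hsm (-1) w (by simp)).mpr hw0
      simpa using this
    have := @hinj (⟨u, hu, hu0⟩, 0) (⟨-w, W₃.neg_mem hw, hw1⟩, 1) (by
      apply Subtype.ext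
      simp [Θ])
    have := congrArg Prod.snd this
    simp at this
  let V : Submodule F (Fin 7 → F) :=
    { carrier := {v | v ∈ W₃ ∧ eval v f = 0}
      add_mem' := fun {a b} ha hb => ⟨W₃.add_mem ha.1 hb.1, hadd a b ha.1 hb.1 ha.2 hb.2⟩
      zero_mem' := ⟨W₃.zero_mem, h00⟩
      smul_mem' := fun c v hv => ⟨W₃.smul_mem c hv.1, by
        rw [eval_smul_hom f _ hfdeg, hv.2, mul_zero]⟩ }
  refine ⟨V, ?_, ?_⟩
  · have h1 : Nat.card V = q ^ 6 := hM
    rw [Module.natCard_eq_pow_finrank (K := F), Nat.card_eq_fintype_card, hcardF] at h1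
    have h2 : (q ^ 2) ^ finrank F V = (q ^ 2) ^ 3 := by rw [h1]; ring
    exact Nat.pow_right_injective (by nlinarith) h2
  · ext P
    rw [Set.mem_inter_iff, hsub, hsub, hS, and_comm]
    rfl
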